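/- For n ∈ {5, 6}, the graceful chromatic number of the diagonal ladder DL_n equals 8. -/

import Mathlib

/-- A graceful `k`-coloring of `G`: a proper vertex coloring with colors in
`{1, ..., k}` whose induced edge coloring `f*(uv) = |f u - f v|` is a proper
edge coloring. -/
def IsGracefulColoring {V : Type*} (G : SimpleGraph V) (k : ℕ) (f : V → ℕ) : Prop :=
  (∀ v, 1 ≤ f v ∧ f v ≤ k) ∧
  (∀ ⦃u v⦄, G.Adj u v → f u ≠ f v) ∧
  (∀ ⦃u v w⦄, G.Adj u v → G.Adj u w → v ≠ w →
    ((f u : ℤ) - f v).natAbs ≠ ((f u : ℤ) - f w).natAbs)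

/-- The graceful chromatic number: the least `k` admitting a graceful `k`-coloring. -/
noncomputable def gracefulChromaticNumber {V : Type*} (G : SimpleGraph V) : ℕ :=
  sInf {k | ∃ f : V → ℕ, IsGracefulColoring G k f}

/-- The diagonal ladder `DL_n` (the strong product `P_n ⊠ P_2`): the closed ladder
together with both diagonals `x_i y_{i+1}` and `y_i x_{i+1}`. -/
def diagonalLadder (n : ℕ) : SimpleGraph (Fin 2 × Fin n) :=
  SimpleGraph.fromRel (fun a b =>
    (a.1 = b.1 ∧ a.2.val + 1 = b.2.val) ∨
    (a.1 ≠ b.1 ∧ (a.2 = b.2 ∨ a.2.val + 1 = b.2.val ∨ b.2.val + 1 = a.2.val)))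

/-!
At a vertex of degree `d` the edge labels are `d` distinct positive numbers, so its color leaves a
gap of at least `d` to `1` or to `k`; at most `2 * (k - d)` colors do. A closed neighborhood needs
pairwise distinct colors. In `DL_5` the six vertices of the three inner rungs have degree five and
form the closed neighborhood of a middle vertex, so `6 ≤ 2 * (k - 5)`, that is, `8 ≤ k`.
Conversely, `DL_6` has a graceful `8`-coloring, and shorter ladders are subgraphs of it.
-/

theorem two_pow_add_two_pow_ne_two_pow {a b c : ℕ} (hbc : b ≠ c) : 2 ^ b + 2 ^ c ≠ 2 ^ a := by
  wlog hlt : b < c generalizing b c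
  · rw [add_comm]
    exact this hbc.symm (by omega)
  intro h
  have hca : c < a := (Nat.pow_lt_pow_iff_right one_lt_two).1 (by rw [← h]; simp)
  have hac : a < c + 1 := by
    refine (Nat.pow_lt_pow_iff_right one_lt_two).1 ?_
    rw [← h, pow_succ, mul_two]
    gcongr
    exact one_lt_two
  omega

section

variable {V W : Type*} {G : SimpleGraph V} {H : SimpleGraph W} {k : ℕ} {f : V → ℕ}

namespace IsGracefulColoring

theorem comp_hom (hf : IsGracefulColoring G k f) (φ : H →g G)
    (hφ : ∀ u, Set.InjOn φ (H.neighborSet u)) : IsGracefulColoring H k (f ∘ φ) :=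
  ⟨fun v => hf.1 (φ v), fun _ _ huv => hf.2.1 (φ.map_adj huv),
    fun u _ _ huv huw hvw =>
      hf.2.2 (φ.map_adj huv) (φ.map_adj huw) ((hφ u).ne huv huw hvw)⟩

theorem injOn_insert_neighborSet (hf : IsGracefulColoring G k f) (u : V) :
    Set.InjOn f (insert u (G.neighborSet u)) := by
  refine (Set.injOn_insert G.notMem_neighborSet_self).2 ⟨fun v huv w huw hvw => ?_, ?_⟩
  · by_contra hne
    exact hf.2.2 huv huw hne (by rw [hvw])
  · rintro ⟨v, huv, hvu⟩
    exact hf.2.1 huv hvu.symm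

theorem degree_le_max (hf : IsGracefulColoring G k f) (u : V) [Fintype (G.neighborSet u)] :
    G.degree u ≤ max (f u - 1) (k - f u) := by
  let difference (v : V) : ℕ := ((f u : ℤ) - f v).natAbs
  have hmaps : ∀ v ∈ G.neighborFinset u,
      difference v ∈ Finset.Icc 1 (max (f u - 1) (k - f u)) := by
    intro v hv
    have hne := hf.2.1 ((G.mem_neighborFinset u v).1 hv)
    have hu := hf.1 u
    have hv := hf.1 v
    simp only [difference, Finset.mem_Icc]
    omega
  have hinj : Set.InjOn difference (G.neighborFinset u) := by
    intro v hv w hw hvw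
    by_contra hne
    exact hf.2.2 (by simpa using hv) (by simpa using hw) hne hvw
  simpa using Finset.card_le_card_of_injOn difference hmaps hinj

theorem degree_add_one_le_two_mul_sub (hf : IsGracefulColoring G k f) [G.LocallyFinite] {u : V}
    {d : ℕ} (hu : d ≤ G.degree u) (hnbr : ∀ v, G.Adj u v → d ≤ G.degree v) :
    G.degree u + 1 ≤ 2 * (k - d) := by
  classical
  have hmaps : ∀ v ∈ insert u (G.neighborFinset u),
      f v ∈ Finset.Icc 1 (k - d) ∪ Finset.Icc (d + 1) k := by
    intro v hv
    have hd : d ≤ G.degree v := by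
      rcases Finset.mem_insert.1 hv with rfl | hv
      · exact hu
      · exact hnbr v ((G.mem_neighborFinset u v).1 hv)
    have hmax := hf.degree_le_max v
    have hcolor := hf.1 v
    simp only [Finset.mem_union, Finset.mem_Icc]
    omega
  calc G.degree u + 1 = (insert u (G.neighborFinset u)).card := by
        rw [Finset.card_insert_of_notMem (G.notMem_neighborFinset_self u),
          G.card_neighborFinset_eq_degree]
    _ ≤ (Finset.Icc 1 (k - d) ∪ Finset.Icc (d + 1) k).card :=
        Finset.card_le_card_of_injOn f hmaps (by simpa using hf.injOn_insert_neighborSet u)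
    _ ≤ (Finset.Icc 1 (k - d)).card + (Finset.Icc (d + 1) k).card := Finset.card_union_le _ _
    _ = 2 * (k - d) := by
        simp only [Nat.card_Icc]
        omega

theorem gracefulChromaticNumber_le (hf : IsGracefulColoring G k f) :
    gracefulChromaticNumber G ≤ k :=
  Nat.sInf_le ⟨f, hf⟩

end IsGracefulColoring

theorem exists_isGracefulColoring [Finite V] (G : SimpleGraph V) :
    ∃ k f, IsGracefulColoring G k f := by
  obtain ⟨n, ⟨e⟩⟩ := Finite.exists_equiv_fin V
  have hinj : Function.Injective fun v => 2 ^ (e v : ℕ) :=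
    (Nat.pow_right_injective le_rfl).comp (Fin.val_injective.comp e.injective)
  refine ⟨2 ^ n, fun v => 2 ^ (e v : ℕ), fun v => ⟨Nat.one_le_two_pow, ?_⟩,
    fun u v huv => hinj.ne huv.ne, fun u v w _ _ hvw heq => ?_⟩
  · exact Nat.pow_le_pow_right two_pos (e v).is_lt.le
  · -- Equal labels at `u` on two edges with distinct ends would give `2 ^ b + 2 ^ c = 2 ^ (a + 1)`.
    have hne : (2 : ℕ) ^ (e v : ℕ) ≠ 2 ^ (e w : ℕ) := hinj.ne hvw
    have hsum : (2 : ℕ) ^ (e v : ℕ) + 2 ^ (e w : ℕ) ≠ 2 ^ ((e u : ℕ) + 1) :=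
      two_pow_add_two_pow_ne_two_pow fun h => hvw (e.injective (Fin.ext h))
    rw [pow_succ] at hsum
    zify at hne hsum
    push_cast at heq
    omega

theorem exists_isGracefulColoring_gracefulChromaticNumber [Finite V] (G : SimpleGraph V) :
    ∃ f, IsGracefulColoring G (gracefulChromaticNumber G) f :=
  Nat.sInf_mem (s := {k | ∃ f, IsGracefulColoring G k f}) (exists_isGracefulColoring G)

theorem gracefulChromaticNumber_le_of_isContained [Finite V] (h : H.IsContained G) :
    gracefulChromaticNumber H ≤ gracefulChromaticNumber G := by
  obtain ⟨φ⟩ := h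
  obtain ⟨f, hf⟩ := exists_isGracefulColoring_gracefulChromaticNumber G
  exact (hf.comp_hom φ.toHom fun _ => φ.injective.injOn).gracefulChromaticNumber_le

end

theorem diagonalLadder_adj {n : ℕ} {a b : Fin 2 × Fin n} :
    (diagonalLadder n).Adj a b ↔ a ≠ b ∧ a.2.val ≤ b.2.val + 1 ∧ b.2.val ≤ a.2.val + 1 := by
  obtain ⟨a, i⟩ := a
  obtain ⟨b, j⟩ := b
  simp only [diagonalLadder, SimpleGraph.fromRel_adj, ne_eq, Prod.mk.injEq, Fin.ext_iff]
  omega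

instance (n : ℕ) : DecidableRel (diagonalLadder n).Adj :=
  fun _ _ => decidable_of_iff' _ diagonalLadder_adj

theorem diagonalLadder_isIndContained {m n : ℕ} (h : m ≤ n) :
    (diagonalLadder m).IsIndContained (diagonalLadder n) :=
  ⟨{  toFun := Prod.map id (Fin.castLE h)
      inj' := Function.injective_id.prodMap (Fin.castLE_injective h)
      map_rel_iff' := by simp [diagonalLadder_adj, Prod.ext_iff] }⟩

theorem degree_diagonalLadder_eq_five {n : ℕ} {a : Fin 2 × Fin n} (hpos : 0 < a.2.val)
    (hlt : a.2.val + 1 < n) : (diagonalLadder n).degree a = 5 := by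
  let previous : Fin n := ⟨a.2.val - 1, by omega⟩
  let next : Fin n := ⟨a.2.val + 1, hlt⟩
  have hnbr : (diagonalLadder n).neighborFinset a =
      (Finset.univ ×ˢ Finset.Icc previous next).erase a := by
    ext b
    simp only [SimpleGraph.mem_neighborFinset, diagonalLadder_adj, Finset.mem_erase,
      Finset.mem_product, Finset.mem_univ, true_and, Finset.mem_Icc, Fin.le_def, previous, next,
      ne_comm (a := a)]
    refine and_congr_right fun _ => ?_
    omega
  have hmem : a ∈ Finset.univ ×ˢ Finset.Icc previous next := by
    simp [Fin.le_def, previous, next]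
  rw [← SimpleGraph.card_neighborFinset_eq_degree, hnbr, Finset.card_erase_of_mem hmem,
    Finset.card_product, Fin.card_Icc, Finset.card_fin]
  simp only [previous, next]
  omega

theorem eight_le_gracefulChromaticNumber_diagonalLadder {n : ℕ} (hn : 5 ≤ n) :
    8 ≤ gracefulChromaticNumber (diagonalLadder n) := by
  obtain ⟨f, hf⟩ := exists_isGracefulColoring_gracefulChromaticNumber (diagonalLadder n)
  let center : Fin 2 × Fin n := (0, ⟨2, by omega⟩)
  have hcenter : (diagonalLadder n).degree center = 5 :=
    degree_diagonalLadder_eq_five (by simp [center]) (by simp only [center]; omega)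
  have hnbr : ∀ v, (diagonalLadder n).Adj center v → 5 ≤ (diagonalLadder n).degree v := by
    intro v hv
    obtain ⟨-, hle, hge⟩ := diagonalLadder_adj.1 hv
    simp only [center] at hle hge
    exact (degree_diagonalLadder_eq_five (by omega) (by omega)).ge
  have hbound := hf.degree_add_one_le_two_mul_sub hcenter.ge hnbr
  omega

set_option maxRecDepth 10000 in
theorem exists_isGracefulColoring_diagonalLadder_six :
    ∃ f, IsGracefulColoring (diagonalLadder 6) 8 f := by
  -- Inner rungs must avoid 4 and 5, so the closed neighborhood of a vertex in one of the two middle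
  -- rungs uses all of 1, 2, 3, 6, 7, 8. Such a vertex is not colored 2, which is equidistant from
  -- 1 and 3, nor 7, which is equidistant from 6 and 8: the middle rungs carry 1, 3, 6, 8.
  refine ⟨fun a => ![![4, 2, 1, 3, 2, 4], ![5, 7, 6, 8, 7, 5]] a.1 a.2, ?_, ?_, ?_⟩ <;> decide

theorem gracefulChromaticNumber_diagonalLadder_le_eight {n : ℕ} (hn : n ≤ 6) :
    gracefulChromaticNumber (diagonalLadder n) ≤ 8 := by
  obtain ⟨f, hf⟩ := exists_isGracefulColoring_diagonalLadder_six
  calc gracefulChromaticNumber (diagonalLadder n)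
      ≤ gracefulChromaticNumber (diagonalLadder 6) :=
        gracefulChromaticNumber_le_of_isContained (diagonalLadder_isIndContained hn).isContained
    _ ≤ 8 := hf.gracefulChromaticNumber_le

theorem gracefulChromaticNumber_diagonalLadder_small (n : ℕ) (hn : n = 5 ∨ n = 6) :
    gracefulChromaticNumber (diagonalLadder n) = 8 := by
  exact le_antisymm (gracefulChromaticNumber_diagonalLadder_le_eight (by omega))
    (eight_le_gracefulChromaticNumber_diagonalLadder (by omega))
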